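/- arXiv:2202.00860 — 3 statements merged into one kernel-verified Lean document; each statement's English description precedes it below -/
import Mathlib

section
/- Let (W,S) be a Coxeter system with connected subsets family F(S) (subsets I ⊆ S with W_I finite admitting no nontrivial direct product decomposition W_I = W_J × W_K with I = J ⊔ K). The map γ_I ↦ w_I (the longest element of W_I) extends to a surjective group homomorphism g_W : C_W → W from the generalized cactus group to W. -/
open CoxeterSystem

variable {B W : Type*} [Group W] {M : CoxeterMatrix B}

/-- `w` is the longest element of the standard parabolic subgroup `W_I`. -/
def IsLongestElementOf (cs : CoxeterSystem M W) (I : Set B) (w : W) : Prop :=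
  w ∈ Subgroup.closure (cs.simple '' I) ∧
    ∀ u ∈ Subgroup.closure (cs.simple '' I), cs.length u ≤ cs.length w

/-- `W_{J∪K}` is the internal direct product `W_J × W_K`: the two standard parabolic
subgroups intersect trivially and commute elementwise. -/
def IsDirectProd (cs : CoxeterSystem M W) (J K : Set B) : Prop :=
  Subgroup.closure (cs.simple '' J) ⊓ Subgroup.closure (cs.simple '' K) = ⊥ ∧
    ∀ x ∈ Subgroup.closure (cs.simple '' J),
      ∀ y ∈ Subgroup.closure (cs.simple '' K), x * y = y * x

/-- `I` is a connected subset of `S`: it is nonempty, `W_I` is finite, and `I` admits no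
partition `I = J ⊔ K` into nonempty sets with `W_I = W_J × W_K`. -/
def IsConnectedSubset (cs : CoxeterSystem M W) (I : Set B) : Prop :=
  I.Nonempty ∧ (Subgroup.closure (cs.simple '' I) : Set W).Finite ∧
    ¬∃ J K : Set B, J.Nonempty ∧ K.Nonempty ∧ J ∪ K = I ∧ Disjoint J K ∧
      IsDirectProd cs J K

/-- The index type of the generators `γ_I` of the generalized cactus group: the connected
subsets of `S`. -/
abbrev ConnIdx (cs : CoxeterSystem M W) : Type _ := {I : Set B // IsConnectedSubset cs I}

/-- The relators of the generalized cactus group `C_W`, relative to an assignment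
`w : Set B → W` of longest elements: `γ_I² = 1`, and `γ_I γ_J = γ_J γ_{w_J(I)}`
whenever `I ⊆ J` or `W_{I∪J} = W_I × W_J`, where `w_J(I) = w_J I w_J⁻¹`. -/
def gcactusRels (cs : CoxeterSystem M W) (w : Set B → W) :
    Set (FreeGroup (ConnIdx cs)) :=
  {r | (∃ x : ConnIdx cs, r = .of x * .of x) ∨
    ∃ x y z : ConnIdx cs, (x.1 ⊆ y.1 ∨ IsDirectProd cs x.1 y.1) ∧
      z.1 = {b | ∃ i ∈ x.1, w y.1 * cs.simple i * (w y.1)⁻¹ = cs.simple b} ∧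
      r = .of x * .of y * (.of z)⁻¹ * (.of y)⁻¹}

/-- The generalized cactus group `C_W` of the Coxeter system `(W,S)`. -/
def GenCactusGroup (cs : CoxeterSystem M W) (w : Set B → W) : Type _ :=
  PresentedGroup (gcactusRels cs w)

instance (cs : CoxeterSystem M W) (w : Set B → W) : Group (GenCactusGroup cs w) := by
  unfold GenCactusGroup; infer_instance

namespace CoxeterSystem

section InversionParity

open Classical in
/-- The action of the simple reflection `s i` on `W × ZMod 2`: conjugation on the first factor,
and a flip of the sign at `s i`. -/
noncomputable def signedConj (cs : CoxeterSystem M W) (i : B) : Function.End (W × ZMod 2) :=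
  fun p => (cs.simple i * p.1 * cs.simple i, p.2 + if p.1 = cs.simple i then 1 else 0)

theorem pow_mul_simple_mul_pow (cs : CoxeterSystem M W) (i j : B) (n : ℕ) :
    (cs.simple i * cs.simple j) ^ n * cs.simple j * (cs.simple i * cs.simple j) ^ n =
      cs.simple j := by
  induction n with
  | zero => simp
  | succ n ih =>
    set x := cs.simple i * cs.simple j with hx
    calc x ^ (n + 1) * cs.simple j * x ^ (n + 1)
        = x ^ n * x * cs.simple j * (x * x ^ n) := by rw [← pow_succ, ← pow_succ']
      _ = x ^ n * cs.simple j * x ^ n := by simp [hx, mul_assoc]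
      _ = cs.simple j := ih

open Classical in
theorem signedConj_mul_pow_apply (cs : CoxeterSystem M W) (i j : B) (n : ℕ) (t : W) (e : ZMod 2) :
    ((cs.signedConj i * cs.signedConj j) ^ n) (t, e) =
      ((cs.simple i * cs.simple j) ^ n * t * ((cs.simple i * cs.simple j) ^ n)⁻¹,
        e + ∑ k ∈ Finset.range (2 * n),
          if t = cs.simple j * (cs.simple i * cs.simple j) ^ k then 1 else 0) := by
  induction n with
  | zero => simp [Function.End.one_def]
  | succ n ih =>
    have key := cs.pow_mul_simple_mul_pow i j n
    rw [pow_succ']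
    change cs.signedConj i (cs.signedConj j (((cs.signedConj i * cs.signedConj j) ^ n) (t, e))) = _
    rw [ih, show 2 * (n + 1) = 2 * n + 1 + 1 by ring, Finset.sum_range_succ,
      Finset.sum_range_succ, pow_succ' _ n]
    set x := cs.simple i * cs.simple j with hx
    have hxi : x⁻¹ = cs.simple j * cs.simple i := by simp [hx]
    have key' : (x ^ n)⁻¹ * cs.simple j = cs.simple j * x ^ n := by
      rw [inv_mul_eq_iff_eq_mul, ← mul_assoc, key]
    have h₁ : x ^ n * t * (x ^ n)⁻¹ = cs.simple j ↔ t = cs.simple j * x ^ (2 * n) := by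
      rw [mul_inv_eq_iff_eq_mul, ← eq_inv_mul_iff_mul_eq, ← mul_assoc, key', mul_assoc, ← pow_add,
        two_mul]
    have h₂ : cs.simple j * (x ^ n * t * (x ^ n)⁻¹) * cs.simple j = cs.simple i ↔
        t = cs.simple j * x ^ (2 * n + 1) := by
      have h₃ : cs.simple j * (x ^ n * t * (x ^ n)⁻¹) * cs.simple j = cs.simple i ↔
          x ^ n * t * (x ^ n)⁻¹ = cs.simple j * x := by
        rw [← eq_mul_inv_iff_mul_eq, ← eq_inv_mul_iff_mul_eq, inv_simple, hx]
      rw [h₃, mul_inv_eq_iff_eq_mul, ← eq_inv_mul_iff_mul_eq, ← mul_assoc, ← mul_assoc, key',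
        mul_assoc, mul_assoc, ← pow_succ', ← pow_add, show n + (n + 1) = 2 * n + 1 by ring]
    simp only [signedConj, h₁, h₂, Prod.mk.injEq]
    refine ⟨?_, by ring⟩
    rw [mul_inv_rev, hxi, hx]
    simp only [mul_assoc]

theorem signedConj_mul_pow_eq_one (cs : CoxeterSystem M W) {i j : B} {n : ℕ}
    (h : (cs.simple i * cs.simple j) ^ n = 1) : (cs.signedConj i * cs.signedConj j) ^ n = 1 := by
  funext ⟨t, e⟩
  refine (cs.signedConj_mul_pow_apply i j n t e).trans ?_
  rw [two_mul, Finset.sum_range_add, ← Finset.sum_add_distrib, Finset.sum_eq_zero, h]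
  · simp [Function.End.one_def]
  · intro k _
    rw [pow_add, h, one_mul, CharTwo.add_self_eq_zero]

theorem isLiftable_signedConj (cs : CoxeterSystem M W) : M.IsLiftable cs.signedConj :=
  fun i j => cs.signedConj_mul_pow_eq_one (cs.simple_mul_simple_pow i j)

/-- The parity of the number of occurrences of `t` in the right inversion sequence of any word
for `w`. -/
noncomputable def inversionParity (cs : CoxeterSystem M W) (w t : W) : ZMod 2 :=
  (cs.lift ⟨_, cs.isLiftable_signedConj⟩ w (t, 0)).2

theorem lift_signedConj_wordProd (cs : CoxeterSystem M W) [DecidableEq W] (ω : List B) (t : W)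
    (e : ZMod 2) :
    cs.lift ⟨_, cs.isLiftable_signedConj⟩ (cs.wordProd ω) (t, e) =
      (cs.wordProd ω * t * (cs.wordProd ω)⁻¹, e + (cs.rightInvSeq ω).count t) := by
  induction ω with
  | nil => simp [Function.End.one_def]
  | cons i ω ih =>
    rw [wordProd_cons, map_mul, lift_apply_simple]
    change cs.signedConj i (cs.lift ⟨_, cs.isLiftable_signedConj⟩ (cs.wordProd ω) (t, e)) = _
    have h : cs.wordProd ω * t * (cs.wordProd ω)⁻¹ = cs.simple i ↔
        (cs.wordProd ω)⁻¹ * cs.simple i * cs.wordProd ω = t := by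
      rw [mul_inv_eq_iff_eq_mul, ← eq_inv_mul_iff_mul_eq, ← mul_assoc, eq_comm]
    rw [ih]
    simp only [signedConj, h, rightInvSeq, List.count_cons, beq_iff_eq, Prod.mk.injEq]
    refine ⟨by simp [mul_assoc], ?_⟩
    push_cast
    ring

theorem inversionParity_wordProd (cs : CoxeterSystem M W) [DecidableEq W] (ω : List B) (t : W) :
    cs.inversionParity (cs.wordProd ω) t = (cs.rightInvSeq ω).count t := by
  simp [inversionParity, lift_signedConj_wordProd]

theorem inversionParity_one (cs : CoxeterSystem M W) (t : W) : cs.inversionParity 1 t = 0 := by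
  simp [inversionParity, Function.End.one_def]

theorem inversionParity_simple_self (cs : CoxeterSystem M W) (i : B) :
    cs.inversionParity (cs.simple i) (cs.simple i) = 1 := by
  classical
  simpa using cs.inversionParity_wordProd [i] (cs.simple i)

theorem inversionParity_mul (cs : CoxeterSystem M W) (u v t : W) :
    cs.inversionParity (u * v) t =
      cs.inversionParity v t + cs.inversionParity u (v * t * v⁻¹) := by
  classical
  obtain ⟨ω, rfl⟩ := cs.wordProd_surjective u
  obtain ⟨ψ, rfl⟩ := cs.wordProd_surjective v
  rw [inversionParity, map_mul]
  change (cs.lift ⟨_, cs.isLiftable_signedConj⟩ (cs.wordProd ω)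
    (cs.lift ⟨_, cs.isLiftable_signedConj⟩ (cs.wordProd ψ) (t, 0))).2 = _
  simp only [lift_signedConj_wordProd, inversionParity_wordProd, zero_add]

theorem mem_rightInvSeq_of_inversionParity_eq_one (cs : CoxeterSystem M W) {ω : List B} {t : W}
    (h : cs.inversionParity (cs.wordProd ω) t = 1) : t ∈ cs.rightInvSeq ω := by
  classical
  by_contra ht
  rw [inversionParity_wordProd, List.count_eq_zero.2 ht] at h
  simp at h

theorem length_mul_lt_of_inversionParity_eq_one (cs : CoxeterSystem M W) {w t : W}
    (h : cs.inversionParity w t = 1) : cs.length (w * t) < cs.length w := by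
  obtain ⟨ω, hω, rfl⟩ := cs.exists_isReduced w
  exact (cs.isRightInversion_of_mem_rightInvSeq hω
    (cs.mem_rightInvSeq_of_inversionParity_eq_one h)).2

theorem inversionParity_self (cs : CoxeterSystem M W) {t : W} (ht : cs.IsReflection t) :
    cs.inversionParity t t = 1 := by
  obtain ⟨u, i, rfl⟩ := ht
  have h := cs.inversionParity_mul u u⁻¹ (u * cs.simple i * u⁻¹)
  rw [mul_inv_cancel, inversionParity_one] at h
  rw [inversionParity_mul, inversionParity_mul]
  have e : u⁻¹ * (u * cs.simple i * u⁻¹) * u⁻¹⁻¹ = cs.simple i := by group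
  rw [e] at h ⊢
  rw [mul_inv_cancel_right, inversionParity_simple_self]
  linear_combination -h

theorem inversionParity_eq_one_iff (cs : CoxeterSystem M W) {w t : W} (ht : cs.IsReflection t) :
    cs.inversionParity w t = 1 ↔ cs.length (w * t) < cs.length w := by
  refine ⟨cs.length_mul_lt_of_inversionParity_eq_one, fun h => ?_⟩
  by_contra hne
  have h0 : cs.inversionParity w t = 0 := by
    generalize cs.inversionParity w t = a at hne
    revert a
    decide
  have h1 : cs.inversionParity (w * t) t = 1 := by
    rw [inversionParity_mul, mul_inv_cancel_right, h0, add_zero, cs.inversionParity_self ht]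
  have h2 := cs.length_mul_lt_of_inversionParity_eq_one h1
  rw [mul_assoc, ht.mul_self, mul_one] at h2
  exact lt_asymm h h2

end InversionParity

theorem exists_isReduced_of_mem_closure (cs : CoxeterSystem M W) {I : Set B} {u : W}
    (hu : u ∈ Subgroup.closure (cs.simple '' I)) :
    ∃ ω : List B, (∀ i ∈ ω, i ∈ I) ∧ cs.IsReduced ω ∧ u = cs.wordProd ω := by
  have step : ∀ u : W, ∀ i ∈ I,
      (∃ ω : List B, (∀ i ∈ ω, i ∈ I) ∧ cs.IsReduced ω ∧ u = cs.wordProd ω) →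
      ∃ ω : List B, (∀ i ∈ ω, i ∈ I) ∧ cs.IsReduced ω ∧ u * cs.simple i = cs.wordProd ω := by
    rintro _ i hi ⟨ω, hωI, hω, rfl⟩
    rcases cs.length_mul_simple (cs.wordProd ω) i with h | h
    · refine ⟨ω ++ [i], ?_, ?_, by simp [wordProd_append]⟩
      · simpa [or_imp, forall_and] using ⟨hωI, hi⟩
      · simpa [IsReduced, wordProd_append, hω.eq] using h
    · have hmem := cs.mem_rightInvSeq_of_inversionParity_eq_one
        ((cs.inversionParity_eq_one_iff (w := cs.wordProd ω) (cs.isReflection_simple i)).2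
          (by lia))
      obtain ⟨k, hk, hki⟩ := List.mem_iff_getElem.1 hmem
      have herase := cs.wordProd_mul_getD_rightInvSeq ω k
      rw [List.getD_eq_getElem _ 1 hk, hki] at herase
      rw [length_rightInvSeq] at hk
      refine ⟨ω.eraseIdx k, fun j hj => hωI j (List.mem_of_mem_eraseIdx hj), ?_, herase⟩
      have := List.length_eraseIdx_add_one hk
      rw [IsReduced, ← herase]
      have := hω.eq
      lia
  induction hu using Subgroup.closure_induction_right with
  | one => exact ⟨[], by simp, by simp [IsReduced], by simp⟩
  | mul_right u _ s hs ih =>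
    obtain ⟨i, hi, rfl⟩ := hs
    exact step u i hi ih
  | mul_inv_cancel u _ s hs ih =>
    obtain ⟨i, hi, rfl⟩ := hs
    rw [inv_simple]
    exact step u i hi ih

end CoxeterSystem

namespace IsLongestElementOf

variable {cs : CoxeterSystem M W} {I : Set B} {w : W}

theorem length_mul_add (hw : IsLongestElementOf cs I w) {u : W}
    (hu : u ∈ Subgroup.closure (cs.simple '' I)) :
    cs.length (w * u) + cs.length u = cs.length w := by
  obtain ⟨ω, hωI, hω, rfl⟩ := cs.exists_isReduced_of_mem_closure hu
  clear hu
  induction ω using List.reverseRecOn with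
  | nil => simp
  | append_singleton ω i ih =>
    have hω' : cs.IsReduced ω := by simpa using hω.take ω.length
    have ih := ih (fun j hj => hωI j (by simp [hj])) hω'
    have hi : cs.simple i ∈ Subgroup.closure (cs.simple '' I) :=
      Subgroup.subset_closure ⟨i, hωI i (by simp), rfl⟩
    have hmem : cs.wordProd ω ∈ Subgroup.closure (cs.simple '' I) := by
      refine Subgroup.list_prod_mem _ fun x hx => ?_
      obtain ⟨j, hj, rfl⟩ := List.mem_map.1 hx
      exact Subgroup.subset_closure ⟨j, hωI j (by simp [hj]), rfl⟩
    have hlen := hω.eq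
    have hlen' := hω'.eq
    simp only [CoxeterSystem.wordProd_append, CoxeterSystem.wordProd_singleton,
      List.length_append, List.length_singleton] at hlen ⊢
    set v := cs.wordProd ω
    have hs := cs.isReflection_simple i
    have hv : cs.inversionParity v (cs.simple i) = 0 := by
      have : cs.inversionParity v (cs.simple i) ≠ 1 := by
        rw [Ne, cs.inversionParity_eq_one_iff hs]
        lia
      generalize cs.inversionParity v (cs.simple i) = a at this
      revert a
      decide
    have hr := hs.conj v
    have hwr : cs.inversionParity w (v * cs.simple i * v⁻¹) = 1 := by
      rw [cs.inversionParity_eq_one_iff hr]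
      refine lt_of_le_of_ne (hw.2 _ ?_) (hr.length_mul_left_ne w)
      exact mul_mem hw.1 (mul_mem (mul_mem hmem hi) (inv_mem hmem))
    have hlt : cs.length (w * v * cs.simple i) < cs.length (w * v) := by
      rw [← cs.inversionParity_eq_one_iff hs, cs.inversionParity_mul, hv, hwr, zero_add]
    have := cs.length_mul_simple (w * v) i
    rw [← mul_assoc]
    lia

theorem inv (hw : IsLongestElementOf cs I w) : IsLongestElementOf cs I w⁻¹ :=
  ⟨inv_mem hw.1, fun u hu => by simpa using hw.2 u hu⟩

theorem unique (hw : IsLongestElementOf cs I w) {w' : W} (hw' : IsLongestElementOf cs I w') :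
    w = w' := by
  have h := hw.length_mul_add (mul_mem (inv_mem hw.1) hw'.1)
  rw [mul_inv_cancel_left] at h
  have h0 : cs.length (w⁻¹ * w') = 0 := by
    have := hw'.2 w hw.1
    lia
  exact inv_mul_eq_one.1 (cs.length_eq_zero_iff.1 h0)

theorem mul_self (hw : IsLongestElementOf cs I w) : w * w = 1 :=
  mul_eq_one_iff_eq_inv.2 (hw.unique hw.inv)

theorem length_conj (hw : IsLongestElementOf cs I w) {u : W}
    (hu : u ∈ Subgroup.closure (cs.simple '' I)) :
    cs.length (w * u * w⁻¹) = cs.length u := by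
  have h₁ := hw.length_mul_add hu
  have h₂ := hw.length_mul_add (inv_mem (mul_mem hw.1 hu))
  rw [← cs.length_inv (w * (w * u)⁻¹), mul_inv_rev, inv_inv, cs.length_inv] at h₂
  lia

/-- Conjugation by a length-preserving element carries the longest element of `W_I` to that of
the conjugate standard parabolic subgroup. -/
theorem conj (hw : IsLongestElementOf cs I w) {v : W}
    (hv : ∀ u ∈ Subgroup.closure (cs.simple '' I), cs.length (v * u * v⁻¹) = cs.length u) :
    IsLongestElementOf cs {b | ∃ i ∈ I, v * cs.simple i * v⁻¹ = cs.simple b}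
      (v * w * v⁻¹) := by
  have himage : cs.simple '' {b | ∃ i ∈ I, v * cs.simple i * v⁻¹ = cs.simple b} =
      (MulAut.conj v).toMonoidHom '' (cs.simple '' I) := by
    ext x
    constructor
    · rintro ⟨b, ⟨i, hi, hib⟩, rfl⟩
      exact ⟨_, ⟨i, hi, rfl⟩, hib⟩
    · rintro ⟨_, ⟨i, hi, rfl⟩, rfl⟩
      have hlen := hv _ (Subgroup.subset_closure ⟨i, hi, rfl⟩)
      rw [cs.length_simple, cs.length_eq_one_iff] at hlen
      obtain ⟨b, hb⟩ := hlen
      exact ⟨b, ⟨i, hi, hb⟩, hb.symm⟩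
  have hclosure : Subgroup.closure
      (cs.simple '' {b | ∃ i ∈ I, v * cs.simple i * v⁻¹ = cs.simple b}) =
      (Subgroup.closure (cs.simple '' I)).map (MulAut.conj v).toMonoidHom := by
    rw [himage, MonoidHom.map_closure]
  rw [IsLongestElementOf, hclosure]
  refine ⟨⟨w, hw.1, rfl⟩, ?_⟩
  rintro _ ⟨u, hu, rfl⟩
  change cs.length (v * u * v⁻¹) ≤ _
  rw [hv u hu, hv w hw.1]
  exact hw.2 u hu

theorem eq_simple {i : B} (hw : IsLongestElementOf cs {i} w) : w = cs.simple i := by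
  refine hw.unique ⟨Subgroup.subset_closure ⟨i, rfl, rfl⟩, fun u hu => ?_⟩
  rw [Set.image_singleton, ← Subgroup.zpowers_eq_closure] at hu
  obtain ⟨k, rfl⟩ := hu
  rcases Int.even_or_odd' k with ⟨n, rfl | rfl⟩
  · simp [zpow_mul, zpow_ofNat]
  · simp [zpow_add, zpow_mul, zpow_ofNat]

end IsLongestElementOf

theorem isConnectedSubset_singleton (cs : CoxeterSystem M W) (i : B) :
    IsConnectedSubset cs {i} := by
  refine ⟨Set.singleton_nonempty i, ?_, ?_⟩
  · rw [Set.image_singleton, ← Subgroup.zpowers_eq_closure]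
    have : IsOfFinOrder (cs.simple i) := isOfFinOrder_iff_pow_eq_one.2 ⟨2, by simp, by simp⟩
    exact finite_zpowers.2 this
  · rintro ⟨J, K, ⟨j, hj⟩, ⟨k, hk⟩, hJK, hdisj, -⟩
    have hji : j ∈ ({i} : Set B) := hJK ▸ Or.inl hj
    have hki : k ∈ ({i} : Set B) := hJK ▸ Or.inr hk
    obtain rfl := Set.mem_singleton_iff.1 hji
    obtain rfl := Set.mem_singleton_iff.1 hki
    exact hdisj.ne_of_mem hj hk rfl

/-- the map `γ_I ↦ w_I` (the longest element of `W_I`) extends to a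
surjective group homomorphism `g_W : C_W → W`. -/
theorem gen_cactus_to_coxeter (cs : CoxeterSystem M W) (w : Set B → W)
    (hw : ∀ I : Set B, IsConnectedSubset cs I → IsLongestElementOf cs I (w I)) :
    ∃ g : GenCactusGroup cs w →* W,
      (∀ x : ConnIdx cs, g (PresentedGroup.of x) = w x.1) ∧ Function.Surjective g := by
  have hrels : ∀ r ∈ gcactusRels cs w, FreeGroup.lift (fun x : ConnIdx cs => w x.1) r = 1 := by
    rintro r (⟨x, rfl⟩ | ⟨x, y, z, hxy, hz, rfl⟩)
    · simpa using (hw x.1 x.2).mul_self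
    · have hy := hw y.1 y.2
      have hconj : ∀ u ∈ Subgroup.closure (cs.simple '' x.1),
          cs.length (w y.1 * u * (w y.1)⁻¹) = cs.length u := by
        intro u hu
        rcases hxy with hsub | hprod
        · exact hy.length_conj (Subgroup.closure_mono (Set.image_mono hsub) hu)
        · rw [← hprod.2 u hu _ hy.1, mul_inv_cancel_right]
      have hlongest := (hw x.1 x.2).conj hconj
      rw [← hz] at hlongest
      have hwz := (hw z.1 z.2).unique hlongest
      have hyy := hy.mul_self
      have hinv : (w y.1)⁻¹ = w y.1 := (mul_eq_one_iff_eq_inv.1 hyy).symm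
      have hcancel (u : W) : w y.1 * (w y.1 * u) = u := by rw [← mul_assoc, hyy, one_mul]
      simp [hwz, hinv, mul_assoc, hcancel, hyy]
  let g : GenCactusGroup cs w →* W := PresentedGroup.toGroup hrels
  have hg : ∀ x : ConnIdx cs, g (PresentedGroup.of x) = w x.1 := fun x =>
    PresentedGroup.toGroup.of hrels
  refine ⟨g, hg, ?_⟩
  rw [← MonoidHom.range_eq_top, eq_top_iff, ← cs.subgroup_closure_range_simple,
    Subgroup.closure_le]
  rintro _ ⟨i, rfl⟩
  have hi := isConnectedSubset_singleton cs i
  exact ⟨PresentedGroup.of (⟨{i}, hi⟩ : ConnIdx cs), (hg ⟨{i}, hi⟩).trans (hw _ hi).eq_simple⟩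
end

section
/- Let W be the Coxeter group of type A_{n−1} (so W ≅ S_n). Then the generalized cactus group C_W is isomorphic to the cactus group J_n, via the map sending s_{p,q} to γ_{{s_p,…,s_{q−1}}}. -/
open CoxeterSystem

/-- The index set of generators `s_{p,q}` of the cactus group `J_n`. -/
def CactusIdx (n : ℕ) : Type :=
  {pq : ℕ × ℕ // 1 ≤ pq.1 ∧ pq.1 < pq.2 ∧ pq.2 ≤ n}

/-- The relators of the cactus group `J_n`. -/
def cactusRels (n : ℕ) : Set (FreeGroup (CactusIdx n)) :=
  {w | (∃ x : CactusIdx n, w = .of x * .of x) ∨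
    (∃ x y : CactusIdx n, Disjoint (Set.Icc x.1.1 x.1.2) (Set.Icc y.1.1 y.1.2) ∧
      w = .of x * .of y * (.of x)⁻¹ * (.of y)⁻¹) ∨
    (∃ x y z : CactusIdx n, x.1.1 ≤ y.1.1 ∧ y.1.2 ≤ x.1.2 ∧
      z.1.1 = x.1.1 + x.1.2 - y.1.2 ∧ z.1.2 = x.1.1 + x.1.2 - y.1.1 ∧
      w = .of x * .of y * (.of x)⁻¹ * (.of z)⁻¹)}

/-- The cactus group `J_n`. -/
def CactusGroup (n : ℕ) : Type := PresentedGroup (cactusRels n)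

instance (n : ℕ) : Group (CactusGroup n) := by unfold CactusGroup; infer_instance

variable {B W : Type*} [Group W] {M : CoxeterMatrix B}

/-! ### The symmetric group as a quotient of the type `A` Coxeter group -/

section Coset

variable {G : Type*} [Group G]

/-- The product `s k * s (k - 1) * ⋯` with `t` factors. -/
def descProd (s : ℕ → G) (k : ℕ) : ℕ → G
  | 0 => 1
  | t + 1 => descProd s k t * s (k - t)

lemma descProd_mul_of_add_lt {s : ℕ → G} (hcomm : ∀ i j, i + 1 < j → s i * s j = s j * s i)
    {k t i : ℕ} (h : i + t < k) : descProd s k t * s i = s i * descProd s k t := by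
  induction t with
  | zero => simp [descProd]
  | succ t ih =>
    rw [descProd, mul_assoc, ← hcomm i (k - t) (by omega), ← mul_assoc, ih (by omega), mul_assoc]

lemma descProd_mul_of_lt {s : ℕ → G} {m : ℕ} (hcomm : ∀ i j, i + 1 < j → s i * s j = s j * s i)
    (hbraid : ∀ i, i + 1 < m → s i * s (i + 1) * s i = s (i + 1) * s i * s (i + 1))
    {k t i : ℕ} (hk : k < m) (ht : t ≤ k + 1) (hi : k + 1 < i + 1 + t) (hik : i + 1 ≤ k) :
    descProd s k t * s (i + 1) = s i * descProd s k t := by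
  induction t with
  | zero => omega
  | succ t ih =>
    obtain h | h : k < i + t ∨ k = i + t := by omega
    · rw [descProd, mul_assoc, hcomm (k - t) (i + 1) (by omega), ← mul_assoc,
        ih (by omega) (by omega), mul_assoc]
    · obtain ⟨u, rfl⟩ : ∃ u, t = u + 1 := ⟨t - 1, by omega⟩
      rw [descProd, descProd, show k - (u + 1) = i by omega, show k - u = i + 1 by omega,
        mul_assoc, mul_assoc, ← mul_assoc (s (i + 1)), ← hbraid i (by omega), mul_assoc,
        ← mul_assoc, descProd_mul_of_add_lt hcomm (by omega)]
      simp only [mul_assoc]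

lemma exists_eq_mul_descProd {s : ℕ → G} {m : ℕ} (hsq : ∀ i, s i * s i = 1)
    (hcomm : ∀ i j, i + 1 < j → s i * s j = s j * s i)
    (hbraid : ∀ i, i + 1 < m → s i * s (i + 1) * s i = s (i + 1) * s i * s (i + 1))
    {k : ℕ} (hk : k < m) {w : G} (hw : w ∈ Subgroup.closure (s '' Set.Iio (k + 1))) :
    ∃ h ∈ Subgroup.closure (s '' Set.Iio k), ∃ t ≤ k + 1, w = h * descProd s k t := by
  have step : ∀ x, (∃ h ∈ Subgroup.closure (s '' Set.Iio k), ∃ t ≤ k + 1,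
      x = h * descProd s k t) → ∀ i < k + 1, ∃ h ∈ Subgroup.closure (s '' Set.Iio k),
      ∃ t ≤ k + 1, x * s i = h * descProd s k t := by
    rintro _ ⟨h, hh, t, ht, rfl⟩ i hi
    have hmem : ∀ j < k, s j ∈ Subgroup.closure (s '' Set.Iio k) := fun j hj =>
      Subgroup.subset_closure ⟨j, hj, rfl⟩
    obtain hit | hit | hit | hit : i + t < k ∨ i + t = k ∨ i + t = k + 1 ∨ k + 1 < i + t := by
      omega
    · refine ⟨h * s i, mul_mem hh (hmem i (by omega)), t, ht, ?_⟩
      rw [mul_assoc, descProd_mul_of_add_lt hcomm (by omega), mul_assoc]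
    · refine ⟨h, hh, t + 1, by omega, ?_⟩
      rw [descProd, show k - t = i by omega, mul_assoc]
    · obtain ⟨u, rfl⟩ : ∃ u, t = u + 1 := ⟨t - 1, by omega⟩
      refine ⟨h, hh, u, by omega, ?_⟩
      rw [descProd, show k - u = i by omega, mul_assoc, mul_assoc, hsq, mul_one]
    · obtain ⟨j, rfl⟩ : ∃ j, i = j + 1 := ⟨i - 1, by omega⟩
      refine ⟨h * s j, mul_mem hh (hmem j (by omega)), t, ht, ?_⟩
      rw [mul_assoc, descProd_mul_of_lt hcomm hbraid hk ht (by omega) (by omega), mul_assoc]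
  induction hw using Subgroup.closure_induction_right with
  | one => exact ⟨1, one_mem _, 0, by omega, by simp [descProd]⟩
  | mul_right x _ y hy ih =>
    obtain ⟨i, hi, rfl⟩ := hy
    exact step x ih i hi
  | mul_inv_cancel x _ y hy ih =>
    obtain ⟨i, hi, rfl⟩ := hy
    rw [inv_eq_of_mul_eq_one_left (hsq i)]
    exact step x ih i hi

lemma map_descProd_apply {s : ℕ → G} {m : ℕ} {f : G →* Equiv.Perm ℕ}
    (hf : ∀ i < m, f (s i) = Equiv.swap i (i + 1)) {k t : ℕ} (hk : k < m) (ht : t ≤ k + 1) :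
    f (descProd s k t) (k + 1 - t) = k + 1 := by
  induction t with
  | zero => simp [descProd]
  | succ t ih =>
    rw [descProd, map_mul, hf _ (by omega), Equiv.Perm.mul_apply, show k + 1 - (t + 1) = k - t by
      omega, Equiv.swap_apply_left, show k - t + 1 = k + 1 - t by omega, ih (by omega)]

lemma map_apply_of_mem_closure_Iio {s : ℕ → G} {m : ℕ} {f : G →* Equiv.Perm ℕ}
    (hf : ∀ i < m, f (s i) = Equiv.swap i (i + 1)) {k : ℕ} (hk : k ≤ m) {w : G}
    (hw : w ∈ Subgroup.closure (s '' Set.Iio k)) : f w (k + 1) = k + 1 := by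
  suffices h : Subgroup.closure (s '' Set.Iio k) ≤
      (MulAction.stabilizer (Equiv.Perm ℕ) (k + 1)).comap f from h hw
  rw [Subgroup.closure_le]
  rintro _ ⟨i, hi, rfl⟩
  have hi : i < k := hi
  simp only [Subgroup.coe_comap, Set.mem_preimage, SetLike.mem_coe, MulAction.mem_stabilizer_iff,
    Equiv.Perm.smul_def, hf i (by omega)]
  exact Equiv.swap_apply_of_ne_of_ne (by omega) (by omega)

end Coset

namespace CoxeterSystem

variable {m : ℕ}

lemma isLiftable_swap (m : ℕ) : (CoxeterMatrix.A m).IsLiftable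
    fun i : Fin m => Equiv.swap (i : ℕ) (i + 1) := by
  intro i j
  have key : ∀ a b c : ℕ, a ≠ b → b ≠ c → a ≠ c →
      (Equiv.swap a b * Equiv.swap b c) ^ 3 = 1 := by
    intro a b c hab hbc hac
    ext x
    simp only [pow_succ, pow_zero, one_mul, Equiv.Perm.mul_apply, Equiv.Perm.one_apply,
      Equiv.swap_apply_def]
    grind
  change (Equiv.swap (i : ℕ) (i + 1) * Equiv.swap (j : ℕ) (j + 1)) ^
    (if i = j then 1 else if (j : ℕ) + 1 = i ∨ (i : ℕ) + 1 = j then 3 else 2) = _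
  split_ifs with h₁ h₂
  · simp [h₁]
  · obtain h | h := h₂
    · rw [← h, Equiv.swap_comm (j : ℕ), Equiv.swap_comm (j + 1 : ℕ)]
      exact key _ _ _ (by omega) (by omega) (by omega)
    · rw [← h]
      exact key _ _ _ (by omega) (by omega) (by omega)
  · have h : (i : ℕ) ≠ j := fun h => h₁ (Fin.ext h)
    ext x
    simp only [pow_two, Equiv.Perm.mul_apply, Equiv.Perm.one_apply, Equiv.swap_apply_def]
    grind

/-- The action of the Coxeter group of type `A` on `ℕ` by permutations, in which the simple
reflection `i` swaps `i` and `i + 1`. -/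
noncomputable def toPerm (cs : CoxeterSystem (CoxeterMatrix.A m) W) : W →* Equiv.Perm ℕ :=
  cs.lift ⟨_, isLiftable_swap m⟩

variable (cs : CoxeterSystem (CoxeterMatrix.A m) W)

@[simp]
lemma toPerm_simple (i : Fin m) : cs.toPerm (cs.simple i) = Equiv.swap (i : ℕ) (i + 1) :=
  cs.lift_apply_simple _ i

lemma toPerm_apply_of_mem {I : Set (Fin m)} {w : W}
    (hw : w ∈ Subgroup.closure (cs.simple '' I)) {x : ℕ}
    (hx : ∀ i ∈ I, x ≠ i ∧ x ≠ i + 1) : cs.toPerm w x = x := by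
  suffices h : Subgroup.closure (cs.simple '' I) ≤
      (MulAction.stabilizer (Equiv.Perm ℕ) x).comap cs.toPerm from h hw
  rw [Subgroup.closure_le]
  rintro _ ⟨i, hi, rfl⟩
  simp only [Subgroup.coe_comap, Set.mem_preimage, SetLike.mem_coe, MulAction.mem_stabilizer_iff,
    Equiv.Perm.smul_def, toPerm_simple]
  exact Equiv.swap_apply_of_ne_of_ne (hx i hi).1 (hx i hi).2

lemma toPerm_mem_Icc {I : Set (Fin m)} {w : W}
    (hw : w ∈ Subgroup.closure (cs.simple '' I)) {a b : ℕ}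
    (hI : ∀ i ∈ I, a ≤ (i : ℕ) ∧ (i : ℕ) < b) {x : ℕ} (hx : x ∈ Set.Icc a b) :
    cs.toPerm w x ∈ Set.Icc a b := by
  induction hw using Subgroup.closure_induction_left generalizing x with
  | one => simpa using hx
  | mul_left y hy w _ ih | inv_mul_cancel y hy w _ ih =>
    obtain ⟨i, hi, rfl⟩ := hy
    have := hI i hi
    have hx := ih hx
    simp only [inv_simple, map_mul, toPerm_simple, Equiv.Perm.mul_apply, Equiv.swap_apply_def,
      Set.mem_Icc] at hx ⊢
    split_ifs <;> omega

lemma simple_mul_comm_of_add_one_lt {i j : Fin m} (h : (i : ℕ) + 1 < j) :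
    cs.simple i * cs.simple j = cs.simple j * cs.simple i := by
  have h2 : CoxeterMatrix.A m i j = 2 := by
    change (if i = j then 1 else if (j : ℕ) + 1 = i ∨ (i : ℕ) + 1 = j then 3 else 2) = 2
    rw [if_neg (by rintro rfl; omega), if_neg (by omega)]
  have := cs.simple_mul_simple_pow i j
  rw [h2, pow_two] at this
  rw [eq_inv_of_mul_eq_one_left this]
  simp

lemma simple_braid {i j : Fin m} (h : (i : ℕ) + 1 = j) :
    cs.simple i * cs.simple j * cs.simple i = cs.simple j * cs.simple i * cs.simple j := by
  have h3 : CoxeterMatrix.A m i j = 3 := by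
    change (if i = j then 1 else if (j : ℕ) + 1 = i ∨ (i : ℕ) + 1 = j then 3 else 2) = 3
    rw [if_neg (by rintro rfl; omega), if_pos (by omega)]
  have := cs.simple_mul_simple_pow i j
  rw [h3, pow_succ, pow_two] at this
  have h' : (cs.simple i * cs.simple j * cs.simple i) *
      (cs.simple j * cs.simple i * cs.simple j) = 1 := by
    simpa only [mul_assoc] using this
  rw [eq_inv_of_mul_eq_one_left h']
  simp [mul_assoc]

theorem toPerm_injective : Function.Injective cs.toPerm := by
  rw [injective_iff_map_eq_one]
  let s : ℕ → W := fun i => if h : i < m then cs.simple ⟨i, h⟩ else 1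
  have hs : ∀ i (h : i < m), s i = cs.simple ⟨i, h⟩ := fun i h => dif_pos h
  have hs' : ∀ i, ¬ i < m → s i = 1 := fun i h => dif_neg h
  have hsq : ∀ i, s i * s i = 1 := by
    intro i
    by_cases h : i < m
    · simp [hs i h]
    · simp [hs' i h]
  have hcomm : ∀ i j, i + 1 < j → s i * s j = s j * s i := by
    intro i j hij
    by_cases h : j < m
    · rw [hs j h, hs i (by omega)]
      exact cs.simple_mul_comm_of_add_one_lt hij
    · simp [hs' j h]
  have hbraid : ∀ i, i + 1 < m → s i * s (i + 1) * s i = s (i + 1) * s i * s (i + 1) := by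
    intro i h
    rw [hs (i + 1) h, hs i (by omega)]
    exact cs.simple_braid rfl
  have hf : ∀ i < m, cs.toPerm (s i) = Equiv.swap i (i + 1) := by
    intro i h
    rw [hs i h, toPerm_simple]
  have main : ∀ k ≤ m, ∀ w ∈ Subgroup.closure (s '' Set.Iio k), cs.toPerm w = 1 → w = 1 := by
    intro k
    induction k with
    | zero =>
      intro _ w hw _
      simpa using hw
    | succ k ih =>
      intro hk w hw h1
      obtain ⟨h, hh, t, ht, rfl⟩ := exists_eq_mul_descProd hsq hcomm hbraid (by omega) hw
      have e := congrArg (· (k + 1 - t)) h1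
      simp only [map_mul, Equiv.Perm.mul_apply, map_descProd_apply hf (show k < m by omega) ht,
        map_apply_of_mem_closure_Iio hf (show k ≤ m by omega) hh, Equiv.Perm.one_apply] at e
      obtain rfl : t = 0 := by omega
      rw [descProd, mul_one] at h1 ⊢
      exact ih (by omega) h hh h1
  intro w
  refine main m le_rfl w ?_
  have : Set.range cs.simple ⊆ s '' Set.Iio m := by
    rintro _ ⟨i, rfl⟩
    exact ⟨i, i.2, hs i i.2⟩
  exact Subgroup.closure_mono this (cs.subgroup_closure_range_simple ▸ Subgroup.mem_top w)

lemma simple_injective_of_A : Function.Injective cs.simple := by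
  intro i j h
  have := congrArg (fun w => cs.toPerm w i) h
  simp only [toPerm_simple, Equiv.swap_apply_def] at this
  apply Fin.ext
  split_ifs at this <;> omega

lemma finite_of_A (cs : CoxeterSystem (CoxeterMatrix.A m) W) : Finite W := by
  let F : W → Fin (m + 1) → Fin (m + 1) := fun w x =>
    ⟨cs.toPerm w x, by
      have := cs.toPerm_mem_Icc (I := Set.univ) (w := w)
        (by rw [Set.image_univ, subgroup_closure_range_simple]; trivial)
        (a := 0) (b := m) (fun i _ => ⟨by omega, i.2⟩) (x := x) ⟨by omega, by omega⟩
      exact Nat.lt_succ_of_le this.2⟩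
  refine Finite.of_injective F fun u v huv => cs.toPerm_injective (Equiv.ext fun x => ?_)
  by_cases hx : x < m + 1
  · exact congrArg Fin.val (congrFun huv ⟨x, hx⟩)
  · have key (w : W) : cs.toPerm w x = x := cs.toPerm_apply_of_mem (I := Set.univ)
      (by rw [Set.image_univ, subgroup_closure_range_simple]; trivial) fun i _ => by omega
    rw [key, key]

/-! ### The exchange property and longest elements -/

lemma exists_shorter_word {ω : List (Fin m)} {i : Fin m}
    (h : cs.toPerm (cs.wordProd ω) (i + 1) < cs.toPerm (cs.wordProd ω) i) :
    ∃ ω' : List (Fin m), ω'.length < ω.length ∧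
      cs.wordProd ω' = cs.wordProd ω * cs.simple i := by
  induction ω with
  | nil => simp at h
  | cons j ω ih =>
    obtain hlt | hle := lt_or_ge (cs.toPerm (cs.wordProd ω) (i + 1)) (cs.toPerm (cs.wordProd ω) i)
    · obtain ⟨ω', hl, hω'⟩ := ih hlt
      exact ⟨j :: ω', by simpa using hl, by rw [wordProd_cons, wordProd_cons, hω', mul_assoc]⟩
    · refine ⟨ω, by simp, ?_⟩
      have hne : cs.toPerm (cs.wordProd ω) i ≠ cs.toPerm (cs.wordProd ω) (i + 1) :=
        fun e => by simpa using (cs.toPerm (cs.wordProd ω)).injective e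
      rw [wordProd_cons, map_mul, toPerm_simple, Equiv.Perm.mul_apply, Equiv.Perm.mul_apply,
        Equiv.swap_apply_def, Equiv.swap_apply_def] at h
      have hj : cs.toPerm (cs.wordProd ω) i = j ∧ cs.toPerm (cs.wordProd ω) (i + 1) = j + 1 := by
        split_ifs at h <;> omega
      have : cs.simple j = cs.wordProd ω * cs.simple i * (cs.wordProd ω)⁻¹ := by
        apply cs.toPerm_injective
        rw [map_mul, map_mul, map_inv, toPerm_simple, toPerm_simple, ← Equiv.swap_apply_apply,
          hj.1, hj.2]
      rw [wordProd_cons, this]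
      simp [mul_assoc]

lemma length_mul_simple_lt {w : W} {i : Fin m} (h : cs.toPerm w (i + 1) < cs.toPerm w i) :
    cs.length (w * cs.simple i) < cs.length w := by
  obtain ⟨ω, hω, rfl⟩ := cs.exists_isReduced w
  obtain ⟨ω', hl, hω'⟩ := cs.exists_shorter_word h
  rw [← hω', hω.eq]
  exact (cs.length_wordProd_le ω').trans_lt hl

lemma toPerm_longest {a b : ℕ} (hb : b ≤ m) {I : Set (Fin m)}
    (hI : ∀ i : Fin m, i ∈ I ↔ a ≤ (i : ℕ) ∧ (i : ℕ) < b) {w : W}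
    (hw : IsLongestElementOf cs I w) {t : ℕ} (hat : a ≤ t) (htb : t ≤ b) :
    cs.toPerm w t = a + b - t := by
  have hdesc : ∀ t, a ≤ t → t < b → cs.toPerm w (t + 1) < cs.toPerm w t := by
    intro t hat htb
    by_contra! hle
    let i : Fin m := ⟨t, by omega⟩
    have hne : cs.toPerm w t ≠ cs.toPerm w (t + 1) := fun e => by
      simpa using (cs.toPerm w).injective e
    have hlt : cs.toPerm (w * cs.simple i) ((i : ℕ) + 1) < cs.toPerm (w * cs.simple i) i := by
      simp only [map_mul, Equiv.Perm.mul_apply, toPerm_simple, Equiv.swap_apply_right,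
        Equiv.swap_apply_left]
      exact lt_of_le_of_ne hle hne
    have h := cs.length_mul_simple_lt hlt
    rw [mul_assoc, simple_mul_simple_self, mul_one] at h
    exact h.not_ge (hw.2 _ (mul_mem hw.1 (Subgroup.subset_closure ⟨i, (hI i).2 ⟨hat, htb⟩, rfl⟩)))
  have hmem : ∀ t, a ≤ t → t ≤ b → a ≤ cs.toPerm w t ∧ cs.toPerm w t ≤ b := fun t h1 h2 =>
    cs.toPerm_mem_Icc hw.1 (fun i hi => (hI i).1 hi) ⟨h1, h2⟩
  have hup : ∀ k, a + k ≤ b → cs.toPerm w (a + k) + k ≤ b := by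
    intro k
    induction k with
    | zero => exact fun h => (hmem a le_rfl h).2
    | succ k ih =>
      intro h
      have h1 := ih (by omega)
      have h2 := hdesc (a + k) (by omega) (by omega)
      rw [add_assoc] at h2
      omega
  have hlow : ∀ k, a + k ≤ b → a + k ≤ cs.toPerm w (b - k) := by
    intro k
    induction k with
    | zero => exact fun h => (hmem b h le_rfl).1
    | succ k ih =>
      intro h
      have h1 := ih (by omega)
      have h2 := hdesc (b - (k + 1)) (by omega) (by omega)
      rw [show b - (k + 1) + 1 = b - k by omega] at h2
      omega
  have h1 := hup (t - a) (by omega)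
  have h2 := hlow (b - t) (by omega)
  rw [show a + (t - a) = t by omega] at h1
  rw [show b - (b - t) = t by omega] at h2
  omega

lemma longest_conj_simple {a b : ℕ} (hb : b ≤ m) {I : Set (Fin m)}
    (hI : ∀ i : Fin m, i ∈ I ↔ a ≤ (i : ℕ) ∧ (i : ℕ) < b) {w : W}
    (hw : IsLongestElementOf cs I w) {i j : Fin m} (hi : i ∈ I) (hij : (i : ℕ) + j + 1 = a + b) :
    w * cs.simple i * w⁻¹ = cs.simple j := by
  have hi := (hI i).1 hi
  apply cs.toPerm_injective
  rw [map_mul, map_mul, map_inv, toPerm_simple, toPerm_simple, ← Equiv.swap_apply_apply,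
    cs.toPerm_longest hb hI hw (by omega) (by omega),
    cs.toPerm_longest hb hI hw (by omega) (by omega), Equiv.swap_comm]
  congr 1 <;> omega

/-! ### Direct products and connected subsets -/

lemma isDirectProd_iff {J K : Set (Fin m)} :
    IsDirectProd cs J K ↔ ∀ i ∈ J, ∀ j ∈ K, (i : ℕ) + 1 < j ∨ (j : ℕ) + 1 < i := by
  constructor
  · rintro ⟨hinf, hcomm⟩ i hi j hj
    have hi' := Subgroup.subset_closure (Set.mem_image_of_mem cs.simple hi)
    have hj' := Subgroup.subset_closure (Set.mem_image_of_mem cs.simple hj)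
    have hne : (i : ℕ) ≠ j := by
      intro h
      obtain rfl := Fin.ext h
      have h1 : cs.simple i ∈ (⊥ : Subgroup W) := hinf ▸ Subgroup.mem_inf.2 ⟨hi', hj'⟩
      have h2 := congrArg (fun w => cs.toPerm w i) (Subgroup.mem_bot.1 h1)
      simp at h2
    have h1 := fun x => congrArg (fun w => cs.toPerm w x) (hcomm _ hi' _ hj')
    simp only [map_mul, toPerm_simple, Equiv.Perm.mul_apply] at h1
    by_contra! hcon
    obtain h | h : (j : ℕ) = i + 1 ∨ (i : ℕ) = j + 1 := by omega
    · have := h1 i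
      simp only [h, Equiv.swap_apply_def] at this
      grind
    · have := h1 j
      simp only [h, Equiv.swap_apply_def] at this
      grind
  · intro h
    refine ⟨?_, ?_⟩
    · rw [eq_bot_iff]
      intro w hw
      obtain ⟨hJ, hK⟩ := Subgroup.mem_inf.1 hw
      refine Subgroup.mem_bot.2 (cs.toPerm_injective (Equiv.ext fun x => ?_))
      rw [map_one, Equiv.Perm.one_apply]
      by_cases hx : ∃ i ∈ J, x = i ∨ x = i + 1
      · obtain ⟨i, hi, hx⟩ := hx
        refine cs.toPerm_apply_of_mem hK fun j hj => ?_
        have := h i hi j hj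
        omega
      · push Not at hx
        exact cs.toPerm_apply_of_mem hJ hx
    · intro x hx y hy
      have hle : Subgroup.closure (cs.simple '' J) ≤
          Subgroup.centralizer (Subgroup.closure (cs.simple '' K)) := by
        rw [Subgroup.centralizer_closure, Subgroup.closure_le]
        rintro _ ⟨i, hi, rfl⟩
        rw [SetLike.mem_coe, Subgroup.mem_centralizer_iff]
        rintro _ ⟨j, hj, rfl⟩
        obtain hlt | hlt := h i hi j hj
        · exact (cs.simple_mul_comm_of_add_one_lt hlt).symm
        · exact cs.simple_mul_comm_of_add_one_lt hlt
      exact (Subgroup.mem_centralizer_iff.1 (hle hx) y hy).symm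

lemma isConnectedSubset_iff {I : Set (Fin m)} :
    IsConnectedSubset cs I ↔ I.Nonempty ∧ I.OrdConnected := by
  have := cs.finite_of_A
  simp only [IsConnectedSubset, isDirectProd_iff, Set.toFinite, true_and]
  refine and_congr_right fun _ => ⟨fun h => ?_, ?_⟩
  · rw [Set.ordConnected_iff]
    by_contra! hcon
    obtain ⟨i, hi, j, hj, -, hij⟩ := hcon
    obtain ⟨k, hk, hkI⟩ := Set.not_subset.1 hij
    have hik : i ≠ k := fun e => hkI (e ▸ hi)
    have hjk : j ≠ k := fun e => hkI (e ▸ hj)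
    refine h ⟨{x ∈ I | x < k}, {x ∈ I | k < x}, ⟨i, hi, lt_of_le_of_ne hk.1 hik⟩,
      ⟨j, hj, lt_of_le_of_ne hk.2 hjk.symm⟩, ?_, ?_, ?_⟩
    · ext x
      simp only [Set.mem_union, Set.mem_ofPred_eq]
      refine ⟨fun hx => hx.elim And.left And.left, fun hx => ?_⟩
      obtain hlt | rfl | hlt := lt_trichotomy x k
      · exact .inl ⟨hx, hlt⟩
      · exact absurd hx hkI
      · exact .inr ⟨hx, hlt⟩
    · rw [Set.disjoint_left]
      exact fun x hx hx' => lt_asymm hx.2 hx'.2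
    · rintro x ⟨-, hx⟩ y ⟨-, hy⟩
      rw [Fin.lt_def] at hx hy
      omega
  · rintro hI ⟨J, K, ⟨i, hi⟩, ⟨j, hj⟩, rfl, -, hJK⟩
    have key : ∀ (A B : Set (Fin m)), (A ∪ B).OrdConnected →
        (∀ i ∈ A, ∀ j ∈ B, (i : ℕ) + 1 < j ∨ (j : ℕ) + 1 < i) →
        ∀ i ∈ A, ∀ j ∈ B, ¬ i ≤ j := by
      intro A B hAB h i hi j hj hij
      have hA : ∀ d : ℕ, ∀ x : Fin m, (x : ℕ) = i + d → x ≤ j → x ∈ A := by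
        intro d
        induction d with
        | zero =>
          intro x hx _
          rwa [Fin.ext (show (x : ℕ) = i by omega)]
        | succ d ih =>
          intro x hx hxj
          have hxj' := Fin.le_def.1 hxj
          have hy := ih ⟨i + d, by omega⟩ rfl (Fin.le_def.2 (show (i : ℕ) + d ≤ j by omega))
          have hx' : x ∈ A ∪ B := hAB.out (.inl hi) (.inr hj) ⟨Fin.le_def.2 (by omega), hxj⟩
          refine hx'.resolve_right fun hxB => ?_
          have := h _ hy x hxB
          simp only at this
          omega
      have := h j (hA (j - i) j (by rw [Fin.le_def] at hij; omega) le_rfl) j hj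
      omega
    obtain h | h := le_total i j
    · exact key J K hI hJK i hi j hj h
    · exact key K J (Set.union_comm J K ▸ hI) (fun x hx y hy => (hJK y hy x hx).symm) j hj i hi h

end CoxeterSystem

/-! ### Intervals as generators -/

namespace CactusIdx

variable {m : ℕ}

/-- The set of simple reflections `{s_p, …, s_{q-1}}` of the generator `s_{p,q}`, with the simple
reflections indexed from `0`. -/
def toSet (x : CactusIdx (m + 1)) : Set (Fin m) :=
  {i : Fin m | x.1.1 - 1 ≤ (i : ℕ) ∧ (i : ℕ) ≤ x.1.2 - 2}

lemma mem_toSet (x : CactusIdx (m + 1)) (i : Fin m) :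
    i ∈ x.toSet ↔ x.1.1 - 1 ≤ (i : ℕ) ∧ (i : ℕ) < x.1.2 - 1 := by
  have := x.2
  change _ ∧ _ ↔ _
  omega

lemma toSet_subset_iff {x y : CactusIdx (m + 1)} :
    x.toSet ⊆ y.toSet ↔ y.1.1 ≤ x.1.1 ∧ x.1.2 ≤ y.1.2 := by
  have hx := x.2
  have hy := y.2
  refine ⟨fun h => ?_, fun h i hi => ?_⟩
  · have h1 := (y.mem_toSet _).1 (@h ⟨x.1.1 - 1, by omega⟩ ((x.mem_toSet _).2 (by dsimp only; omega)))
    have h2 := (y.mem_toSet _).1 (@h ⟨x.1.2 - 2, by omega⟩ ((x.mem_toSet _).2 (by dsimp only; omega)))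
    dsimp only at h1 h2
    omega
  · rw [mem_toSet] at hi ⊢
    omega

lemma toSet_injective : Function.Injective (toSet (m := m)) := by
  intro x y h
  have h1 := toSet_subset_iff.1 h.subset
  have h2 := toSet_subset_iff.1 h.symm.subset
  exact Subtype.ext (Prod.ext (by omega) (by omega))

variable (cs : CoxeterSystem (CoxeterMatrix.A m) W)

lemma isConnectedSubset_toSet (x : CactusIdx (m + 1)) : IsConnectedSubset cs x.toSet := by
  have hx := x.2
  refine cs.isConnectedSubset_iff.2 ⟨⟨⟨x.1.1 - 1, by omega⟩, ?_⟩, ⟨fun i hi j hj k hk => ?_⟩⟩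
  · rw [mem_toSet]
    dsimp only
    omega
  · rw [mem_toSet] at hi hj ⊢
    rw [Set.mem_Icc, Fin.le_def, Fin.le_def] at hk
    omega

lemma exists_toSet_eq {I : Set (Fin m)} (hI : IsConnectedSubset cs I) :
    ∃ x : CactusIdx (m + 1), x.toSet = I := by
  obtain ⟨hne, hoc⟩ := cs.isConnectedSubset_iff.1 hI
  obtain ⟨a, ha, hamin⟩ := Set.exists_min_image I id I.toFinite hne
  obtain ⟨b, hb, hbmax⟩ := Set.exists_max_image I id I.toFinite hne
  have hab := Fin.le_def.1 (hamin b hb)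
  dsimp only [id] at hab
  let x : CactusIdx (m + 1) := ⟨(a + 1, b + 2), by dsimp only; omega⟩
  refine ⟨x, ?_⟩
  ext i
  rw [mem_toSet]
  dsimp only [x]
  refine ⟨fun h => hoc.out ha hb ⟨Fin.le_def.2 (by omega), Fin.le_def.2 (by omega)⟩, fun h => ?_⟩
  have h1 := Fin.le_def.1 (hamin i h)
  have h2 := Fin.le_def.1 (hbmax i h)
  dsimp only [id] at h1 h2
  omega

/-- The generators of the cactus group correspond to the connected subsets in type `A`. -/
noncomputable def equivConnIdx : CactusIdx (m + 1) ≃ ConnIdx cs :=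
  Equiv.ofBijective (fun x => ⟨x.toSet, x.isConnectedSubset_toSet cs⟩)
    ⟨fun _ _ h => toSet_injective (congrArg Subtype.val h),
      fun I => (exists_toSet_eq cs I.2).imp fun _ hx => Subtype.ext hx⟩

@[simp]
lemma coe_equivConnIdx (x : CactusIdx (m + 1)) : (equivConnIdx cs x).1 = x.toSet := rfl

lemma isDirectProd_toSet_iff {x y : CactusIdx (m + 1)} :
    IsDirectProd cs x.toSet y.toSet ↔
      Disjoint (Set.Icc x.1.1 x.1.2) (Set.Icc y.1.1 y.1.2) := by
  have hx := x.2
  have hy := y.2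
  rw [cs.isDirectProd_iff, Set.disjoint_left]
  simp only [Set.mem_Icc, mem_toSet]
  refine ⟨fun h c hcx hcy => ?_, fun h i hi j hj => ?_⟩
  · let i : Fin m := ⟨if c = x.1.2 then c - 2 else c - 1, by split_ifs <;> omega⟩
    let j : Fin m := ⟨if c = y.1.2 then c - 2 else c - 1, by split_ifs <;> omega⟩
    have := h i (by dsimp only [i]; split_ifs <;> omega) j (by dsimp only [j]; split_ifs <;> omega)
    dsimp only [i, j] at this
    split_ifs at this <;> omega
  · have h1 := @h x.1.1
    have h2 := @h y.1.1
    omega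

variable {cs} {w : Set (Fin m) → W}

lemma setOf_conj_of_isDirectProd {I J : Set (Fin m)} (hw : IsLongestElementOf cs J (w J))
    (h : IsDirectProd cs I J) :
    {b | ∃ i ∈ I, w J * cs.simple i * (w J)⁻¹ = cs.simple b} = I := by
  have key : ∀ i ∈ I, w J * cs.simple i * (w J)⁻¹ = cs.simple i := fun i hi => by
    rw [← h.2 _ (Subgroup.subset_closure ⟨i, hi, rfl⟩) _ hw.1, mul_inv_cancel_right]
  ext b
  refine ⟨?_, fun hb => ⟨b, hb, key b hb⟩⟩
  rintro ⟨i, hi, hib⟩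
  rw [key i hi] at hib
  exact cs.simple_injective_of_A hib ▸ hi

lemma setOf_conj_eq_toSet_iff {x y z : CactusIdx (m + 1)}
    (hw : IsLongestElementOf cs y.toSet (w y.toSet)) (hp : y.1.1 ≤ x.1.1) (hq : x.1.2 ≤ y.1.2) :
    z.toSet = {b | ∃ i ∈ x.toSet, w y.toSet * cs.simple i * (w y.toSet)⁻¹ = cs.simple b} ↔
      z.1.1 = y.1.1 + y.1.2 - x.1.2 ∧ z.1.2 = y.1.1 + y.1.2 - x.1.1 := by
  have hx := x.2
  have hy := y.2
  let z' : CactusIdx (m + 1) :=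
    ⟨(y.1.1 + y.1.2 - x.1.2, y.1.1 + y.1.2 - x.1.1), by dsimp only; omega⟩
  have hconj : ∀ i j : Fin m, i ∈ x.toSet → (i : ℕ) + j + 2 = y.1.1 + y.1.2 - 1 →
      w y.toSet * cs.simple i * (w y.toSet)⁻¹ = cs.simple j := fun i j hi hij =>
    cs.longest_conj_simple (show y.1.2 - 1 ≤ m by omega) y.mem_toSet hw
      (toSet_subset_iff.2 ⟨hp, hq⟩ hi) (by omega)
  have hz' : {b | ∃ i ∈ x.toSet, w y.toSet * cs.simple i * (w y.toSet)⁻¹ = cs.simple b} =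
      z'.toSet := by
    ext b
    rw [mem_toSet]
    dsimp only [z']
    constructor
    · rintro ⟨i, hi, hib⟩
      have hi' := (x.mem_toSet i).1 hi
      let j : Fin m := ⟨y.1.1 + y.1.2 - 3 - i, by omega⟩
      rw [hconj i j hi (by dsimp only [j]; omega)] at hib
      rw [← cs.simple_injective_of_A hib]
      dsimp only [j]
      omega
    · intro hb
      let i : Fin m := ⟨y.1.1 + y.1.2 - 3 - b, by omega⟩
      have hi : i ∈ x.toSet := (x.mem_toSet i).2 (by dsimp only [i]; omega)
      exact ⟨i, hi, hconj i b hi (by dsimp only [i]; omega)⟩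
  rw [hz', toSet_injective.eq_iff]
  exact ⟨fun h => h ▸ ⟨rfl, rfl⟩, fun h => Subtype.ext (Prod.ext h.1 h.2)⟩

end CactusIdx

/-! ### The isomorphism -/

section Presentation

open CactusIdx PresentedGroup

lemma PresentedGroup.of_mul_of_eq_one {α : Type*} {rels : Set (FreeGroup α)} {a : α}
    (h : FreeGroup.of a * .of a ∈ rels) : (of a * of a : PresentedGroup rels) = 1 :=
  one_of_mem h

lemma PresentedGroup.of_conj_eq_one {α : Type*} {rels : Set (FreeGroup α)} {a b c d : α}
    (h : FreeGroup.of a * .of b * (.of c)⁻¹ * (.of d)⁻¹ ∈ rels) :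
    (of a * of b * (of c)⁻¹ * (of d)⁻¹ : PresentedGroup rels) = 1 :=
  one_of_mem h

variable {m : ℕ} {cs : CoxeterSystem (CoxeterMatrix.A m) W} {w : Set (Fin m) → W}

lemma mem_gcactusRels {x y z : CactusIdx (m + 1)}
    (h : x.toSet ⊆ y.toSet ∨ IsDirectProd cs x.toSet y.toSet)
    (hz : z.toSet =
      {b | ∃ i ∈ x.toSet, w y.toSet * cs.simple i * (w y.toSet)⁻¹ = cs.simple b}) :
    FreeGroup.of (equivConnIdx cs x) * .of (equivConnIdx cs y) * (.of (equivConnIdx cs z))⁻¹ *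
      (.of (equivConnIdx cs y))⁻¹ ∈ gcactusRels cs w :=
  .inr ⟨equivConnIdx cs x, equivConnIdx cs y, equivConnIdx cs z, h, hz, rfl⟩

lemma lift_equivConnIdx_eq_one
    (hw : ∀ I : Set (Fin m), IsConnectedSubset cs I → IsLongestElementOf cs I (w I))
    (r : FreeGroup (CactusIdx (m + 1))) (hr : r ∈ cactusRels (m + 1)) :
    FreeGroup.lift (fun x => (of (equivConnIdx cs x) : PresentedGroup (gcactusRels cs w))) r
      = 1 := by
  obtain ⟨x, rfl⟩ | ⟨x, y, hd, rfl⟩ | ⟨x, y, z, hp, hq, hz, hz', rfl⟩ := hr <;>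
    simp only [map_mul, map_inv, FreeGroup.lift_apply_of]
  · exact of_mul_of_eq_one (.inl ⟨_, rfl⟩)
  · have hd := (isDirectProd_toSet_iff cs).2 hd
    exact of_conj_eq_one (mem_gcactusRels (.inr hd)
      (setOf_conj_of_isDirectProd (hw _ (y.isConnectedSubset_toSet cs)) hd).symm)
  · have hx := x.2
    have hy := y.2
    have hp' : x.1.1 ≤ z.1.1 := by omega
    have hq' : z.1.2 ≤ x.1.2 := by omega
    have h : (of (equivConnIdx cs z) * of (equivConnIdx cs x) * (of (equivConnIdx cs y))⁻¹ *
        (of (equivConnIdx cs x))⁻¹ : PresentedGroup (gcactusRels cs w)) = 1 :=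
      of_conj_eq_one (mem_gcactusRels (.inl (toSet_subset_iff.2 ⟨hp', hq'⟩))
        ((setOf_conj_eq_toSet_iff (hw _ (x.isConnectedSubset_toSet cs)) hp' hq').2
          ⟨by omega, by omega⟩))
    simpa [mul_assoc] using inv_eq_one.2 h

lemma lift_equivConnIdx_symm_eq_one
    (hw : ∀ I : Set (Fin m), IsConnectedSubset cs I → IsLongestElementOf cs I (w I))
    (r : FreeGroup (ConnIdx cs)) (hr : r ∈ gcactusRels cs w) :
    FreeGroup.lift
      (fun I => (of ((equivConnIdx cs).symm I) : PresentedGroup (cactusRels (m + 1)))) r = 1 := by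
  obtain ⟨X, rfl⟩ | ⟨X, Y, Z, hXY, hZ, rfl⟩ := hr
  · simp only [map_mul, FreeGroup.lift_apply_of]
    exact of_mul_of_eq_one (.inl ⟨_, rfl⟩)
  · obtain ⟨x, rfl⟩ := (equivConnIdx cs).surjective X
    obtain ⟨y, rfl⟩ := (equivConnIdx cs).surjective Y
    obtain ⟨z, rfl⟩ := (equivConnIdx cs).surjective Z
    have hwy := hw _ (y.isConnectedSubset_toSet cs)
    simp only [map_mul, map_inv, FreeGroup.lift_apply_of, Equiv.symm_apply_apply]
    simp only [coe_equivConnIdx] at hXY hZ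
    obtain hsub | hd := hXY
    · have hx := x.2
      have hy := y.2
      obtain ⟨hp, hq⟩ := toSet_subset_iff.1 hsub
      obtain ⟨hz, hz'⟩ := (setOf_conj_eq_toSet_iff hwy hp hq).1 hZ
      have h : (of y * of z * (of y)⁻¹ * (of x)⁻¹ : PresentedGroup (cactusRels (m + 1))) = 1 :=
        of_conj_eq_one (.inr (.inr ⟨_, _, _, by omega, by omega, by omega, by omega, rfl⟩))
      simpa [mul_assoc] using inv_eq_one.2 h
    · rw [setOf_conj_of_isDirectProd hwy hd] at hZ
      obtain rfl := toSet_injective hZ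
      exact of_conj_eq_one (.inr (.inl ⟨_, _, (isDirectProd_toSet_iff cs).1 hd, rfl⟩))

/-- The isomorphism of the cactus group with the generalized cactus group in type `A`. -/
noncomputable def cactusMulEquiv
    (hw : ∀ I : Set (Fin m), IsConnectedSubset cs I → IsLongestElementOf cs I (w I)) :
    PresentedGroup (cactusRels (m + 1)) ≃* PresentedGroup (gcactusRels cs w) :=
  MonoidHom.toMulEquiv (toGroup (lift_equivConnIdx_eq_one hw))
    (toGroup (lift_equivConnIdx_symm_eq_one hw))
    (PresentedGroup.ext fun x => by simp [toGroup.of])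
    (PresentedGroup.ext fun x => by simp [toGroup.of])

lemma cactusMulEquiv_of
    (hw : ∀ I : Set (Fin m), IsConnectedSubset cs I → IsLongestElementOf cs I (w I))
    (x : CactusIdx (m + 1)) : cactusMulEquiv hw (of x) = of (equivConnIdx cs x) :=
  toGroup.of (lift_equivConnIdx_eq_one hw)

end Presentation

/-- for `W` of type `A_{n-1}`, the generalized cactus group `C_W` is
isomorphic to the cactus group `J_n` via `s_{p,q} ↦ γ_{{s_p, …, s_{q-1}}}`. -/
theorem gen_cactus_typeA_iso_cactus {W : Type*} [Group W] (n : ℕ) (hn : 2 ≤ n)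
    (cs : CoxeterSystem (CoxeterMatrix.Aₙ (n - 1)) W) (w : Set (Fin (n - 1)) → W)
    (hw : ∀ I : Set (Fin (n - 1)), IsConnectedSubset cs I →
      IsLongestElementOf cs I (w I)) :
    ∃ φ : CactusGroup n ≃* GenCactusGroup cs w,
      ∀ (x : CactusIdx n)
        (h : IsConnectedSubset cs
          {i : Fin (n - 1) | x.1.1 - 1 ≤ (i : ℕ) ∧ (i : ℕ) ≤ x.1.2 - 2}),
        φ (PresentedGroup.of x) = PresentedGroup.of
          (⟨{i : Fin (n - 1) | x.1.1 - 1 ≤ (i : ℕ) ∧ (i : ℕ) ≤ x.1.2 - 2}, h⟩ :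
            ConnIdx cs) := by
  obtain ⟨m, rfl⟩ : ∃ m, n = m + 1 := ⟨n - 1, by omega⟩
  exact ⟨cactusMulEquiv (cs := cs) hw, fun x _ => cactusMulEquiv_of (cs := cs) hw x⟩
end

section
/- Let (W,S) be a right-angled Coxeter system, G a group of automorphisms of (W,S), I ⊆ S, and {g_i}_{i∈I} a family of involutions in G satisfying: (1) g_i(s) ∈ S for all i ∈ I, s ∈ S; (2) for i,j ∈ I with ij = ji, either g_i(j) ∈ I, g_j(i) = i, and g_{g_i(j)} = g_i g_j g_i, or symmetrically with i and j exchanged; (3) g_i(i) = i for all i ∈ I. Let H ≤ W ⋊ G be generated by {i·g_i}_{i∈I}, and let L be the abstract group generated by {l_i}_{i∈I} with relations l_i² = 1 and l_i l_j = l_{g_i(j)} l_i whenever ij = ji, g_j(i) = i, g_i(j) ∈ I, and g_{g_i(j)} = g_i g_j g_i. Then the map l_i ↦ i·g_i is a group isomorphism L → H. -/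
open CoxeterSystem SemidirectProduct

variable {B W : Type*} [Group W] {M : CoxeterMatrix B}

/-- The relators of the group `L`: `l_i² = 1`, and `l_i l_j = l_{g_i(j)} l_i` whenever
`ij = ji`, `g_j(i) = i`, `g_i(j) ∈ I`, and `g_{g_i(j)} = g_i g_j g_i`.  Here the action
of `g_i` on the index set is recorded by `gB`. -/
def Lrels (cs : CoxeterSystem M W) (I : Set B) (g_ : B → MulAut W) (gB : B → B → B) :
    Set (FreeGroup {i : B // i ∈ I}) :=
  {r | (∃ x : {i : B // i ∈ I}, r = .of x * .of x) ∨
    ∃ x y z : {i : B // i ∈ I},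
      cs.simple x.1 * cs.simple y.1 = cs.simple y.1 * cs.simple x.1 ∧
      gB y.1 x.1 = x.1 ∧ gB x.1 y.1 ∈ I ∧ z.1 = gB x.1 y.1 ∧
      g_ (gB x.1 y.1) = g_ x.1 * g_ y.1 * g_ x.1 ∧
      r = .of x * .of y * (.of z * .of x)⁻¹}

/-- The subgroup `H` of `W ⋊ Aut(W)` generated by the elements `i · g_i` for `i ∈ I`. -/
def Hsub (cs : CoxeterSystem M W) (I : Set B) (g_ : B → MulAut W) :
    Subgroup (W ⋊[MonoidHom.id (MulAut W)] MulAut W) :=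
  Subgroup.closure {x | ∃ i ∈ I, x = inl (cs.simple i) * inr (g_ i)}

/-- `FrontRemoval r b v v'`: the word `v'` arises from `v` by deleting a letter `b` all of whose
predecessors are `r`-related to `b`. -/
inductive FrontRemoval {B : Type*} (r : B → B → Prop) (b : B) : List B → List B → Prop
  | head (v : List B) : FrontRemoval r b (b :: v) v
  | cons {c : B} {v v' : List B} :
      r b c → FrontRemoval r b v v' → FrontRemoval r b (c :: v) (c :: v')

/-- A word is irreducible if no two equal letters in it can be brought together and cancelled
by exchanging neighbouring `r`-related letters. -/
inductive IrreducibleWord {B : Type*} (r : B → B → Prop) : List B → Prop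
  | nil : IrreducibleWord r []
  | cons {b : B} {v : List B} : IrreducibleWord r v → (∀ v', ¬ FrontRemoval r b v v') →
      IrreducibleWord r (b :: v)

/-- The generator `b` acting in the contragredient geometric representation of the right-angled
Coxeter group with commutation relation `r`. -/
noncomputable def contragredientReflection {B : Type*} (r : B → B → Prop) (b : B) :
    Function.End (B → ℤ) := by
  classical
  exact fun f c => if c = b then -f b else if r b c then f c else f c + 2 * f b

/-- The word in `B` underlying a product of twisted generators `i · g_i`: moving all the `g_i`
to the right turns the letters after `i` into their images under `g_i`. -/
def twistedWord {B : Type*} {I : Set B} (gB : B → B → B) : List {i : B // i ∈ I} → List B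
  | [] => []
  | x :: xs => x.1 :: (twistedWord gB xs).map (gB x.1)

section Words

variable {B : Type*} {r : B → B → Prop}

theorem FrontRemoval.map {g : B → B} (hg : ∀ b c, r b c → r (g b) (g c)) {b : B}
    {v v' : List B} (h : FrontRemoval r b v v') :
    FrontRemoval r (g b) (v.map g) (v'.map g) := by
  induction h with
  | head v => exact .head _
  | cons hc _ ih => exact .cons (hg _ _ hc) ih

theorem FrontRemoval.exists_of_removal {b c : B} (hcb : r c b) {v v' : List B}
    (h : FrontRemoval r b v v') :
    ∀ {w}, FrontRemoval r c v' w → ∃ w', FrontRemoval r c v w' := by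
  induction h with
  | head v => exact fun hw => ⟨_, .cons hcb hw⟩
  | cons _ _ ih =>
    intro w hw
    cases hw with
    | head => exact ⟨_, .head _⟩
    | cons hd hu =>
      obtain ⟨w', hw'⟩ := ih hu
      exact ⟨_, .cons hd hw'⟩

theorem IrreducibleWord.of_frontRemoval (hsymm : ∀ b c, r b c → r c b) {b : B}
    {v v' : List B} (h : FrontRemoval r b v v') (hv : IrreducibleWord r v) :
    IrreducibleWord r v' := by
  induction h with
  | head v => cases hv; assumption
  | cons hc h' ih =>
    cases hv with
    | cons hu hn =>
      refine .cons (ih hu) fun w hw => ?_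
      obtain ⟨w', hw'⟩ := h'.exists_of_removal (hsymm _ _ hc) hw
      exact hn w' hw'

theorem IrreducibleWord.map {g : B → B} (hg : ∀ b c, r b c → r (g b) (g c))
    (hgg : Function.Involutive g) {v : List B} (hv : IrreducibleWord r v) :
    IrreducibleWord r (v.map g) := by
  induction hv with
  | nil => exact .nil
  | cons _ hn ih =>
    refine .cons ih fun w hw => hn (w.map g) ?_
    simpa [hgg.comp_self, hgg _] using hw.map hg

theorem contragredientReflection_apply_self (b : B) (f : B → ℤ) :
    contragredientReflection r b f b = -f b := by
  simp [contragredientReflection]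

theorem contragredientReflection_apply_of_rel {b c : B} (hne : c ≠ b) (h : r b c) (f : B → ℤ) :
    contragredientReflection r b f c = f c := by
  simp [contragredientReflection, hne, h]

theorem contragredientReflection_apply_of_not_rel {b c : B} (hne : c ≠ b) (h : ¬ r b c)
    (f : B → ℤ) : contragredientReflection r b f c = f c + 2 * f b := by
  simp [contragredientReflection, hne, h]

theorem contragredientReflection_mul_self (b : B) :
    contragredientReflection r b * contragredientReflection r b = 1 := by
  funext f c
  change contragredientReflection r b (contragredientReflection r b f) c = f c
  simp only [contragredientReflection]
  split_ifs <;> simp_all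

theorem contragredientReflection_comm (hsymm : ∀ b c, r b c → r c b) {b c : B} (h : r b c) :
    contragredientReflection r b * contragredientReflection r c =
      contragredientReflection r c * contragredientReflection r b := by
  by_cases hbc : b = c
  · rw [hbc]
  funext f d
  change contragredientReflection r b (contragredientReflection r c f) d =
    contragredientReflection r c (contragredientReflection r b f) d
  have h' := hsymm _ _ h
  have hcb : ¬ c = b := fun e => hbc e.symm
  simp only [contragredientReflection]
  split_ifs <;> simp_all
  ring

theorem contragredientReflection_le {b c : B} (hne : c ≠ b) {f : B → ℤ} (hf : 0 < f b) :
    f c ≤ contragredientReflection r b f c := by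
  by_cases h : r b c
  · rw [contragredientReflection_apply_of_rel hne h]
  · rw [contragredientReflection_apply_of_not_rel hne h]; linarith

/-- In the contragredient representation, applying an irreducible word to a point of the
fundamental chamber keeps every coordinate whose letter cannot be deleted at the front positive,
and keeps the sum of two coordinates with unrelated letters positive. -/
theorem IrreducibleWord.eval_pos (hsymm : ∀ b c, r b c → r c b) {v : List B}
    (hv : IrreducibleWord r v) :
    (∀ b, (∀ v', ¬ FrontRemoval r b v v') →
      0 < (v.map (contragredientReflection r)).prod (1 : B → ℤ) b) ∧
    ∀ b c, b ≠ c → ¬ r b c →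
      0 < (v.map (contragredientReflection r)).prod (1 : B → ℤ) b +
        (v.map (contragredientReflection r)).prod (1 : B → ℤ) c := by
  induction hv with
  | nil => exact ⟨fun b _ => one_pos, fun b c _ _ => two_pos⟩
  | @cons d v _ hn ih =>
    obtain ⟨ih₁, ih₂⟩ := ih
    have hd := ih₁ d hn
    rw [List.map_cons, List.prod_cons]
    change (∀ b, _ → 0 < contragredientReflection r d _ b) ∧ ∀ b c, _ → _ →
      0 < contragredientReflection r d _ b + contragredientReflection r d _ c
    generalize (v.map (contragredientReflection r)).prod (1 : B → ℤ) = f at *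
    refine ⟨fun b hb => ?_, fun b c hbc hr => ?_⟩
    · have hbd : b ≠ d := by rintro rfl; exact hb _ (.head _)
      by_cases h : r d b
      · rw [contragredientReflection_apply_of_rel hbd h]
        exact ih₁ b fun v' hv' => hb _ (.cons (hsymm _ _ h) hv')
      · rw [contragredientReflection_apply_of_not_rel hbd h]
        linarith [ih₂ d b hbd.symm h]
    · have hsum := ih₂ b c hbc hr
      by_cases hbd : b = d
      · subst hbd
        rw [contragredientReflection_apply_self,
          contragredientReflection_apply_of_not_rel hbc.symm hr]
        linarith
      by_cases hcd : c = d
      · subst hcd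
        rw [contragredientReflection_apply_self,
          contragredientReflection_apply_of_not_rel hbc fun h => hr (hsymm _ _ h)]
        linarith
      linarith [contragredientReflection_le (r := r) hbd hd,
        contragredientReflection_le (r := r) hcd hd]

theorem IrreducibleWord.eq_nil (hsymm : ∀ b c, r b c → r c b) {v : List B}
    (hv : IrreducibleWord r v)
    (h : (v.map (contragredientReflection r)).prod = 1) : v = [] := by
  cases hv with
  | nil => rfl
  | @cons b v hv hn =>
    have hpos := (hv.eval_pos hsymm).1 b hn
    have hval := congrFun (congrFun h (1 : B → ℤ)) b
    rw [List.map_cons, List.prod_cons] at hval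
    change contragredientReflection r b _ b = 1 at hval
    rw [contragredientReflection_apply_self] at hval
    linarith

variable {I : Set B} {gB : B → B → B} {L : Type*} [Group L] {l : {i : B // i ∈ I} → L}

/-- Deleting a front letter of a twisted word is realised by a relation between the
elements `l_i`. -/
theorem exists_twistedWord_of_frontRemoval
    (hfix : ∀ x : {i : B // i ∈ I}, gB x x = x)
    (hinvol : ∀ x : {i : B // i ∈ I}, Function.Involutive (gB x))
    (hmap : ∀ (x : {i : B // i ∈ I}) (b c : B), r b c → r (gB x b) (gB x c))
    (hl : ∀ x, l x * l x = 1)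
    (hswap : ∀ x y : {i : B // i ∈ I}, r x y → ∃ k z : {i : B // i ∈ I},
      (k : B) = gB x y ∧ gB k z = x ∧ (∀ b, gB k (gB z b) = gB x (gB y b)) ∧
        l x * l y = l k * l z)
    (ys : List {i : B // i ∈ I}) :
    ∀ (x : {i : B // i ∈ I}) (w : List B),
      FrontRemoval r x ((twistedWord gB ys).map (gB x)) w →
      ∃ zs, twistedWord gB zs = w ∧ (zs.map l).prod = l x * (ys.map l).prod := by
  induction ys with
  | nil => intro x w h; cases h
  | cons y ys ih =>
    intro x w h
    rw [twistedWord, List.map_cons] at h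
    generalize hu : gB x y = u at h
    cases h with
    | head =>
      have hxy : y = x := Subtype.ext ((hinvol x).injective (hu.trans (hfix x).symm))
      subst hxy
      refine ⟨ys, by simp [(hinvol y).comp_self], ?_⟩
      rw [List.map_cons, List.prod_cons, ← mul_assoc, hl, one_mul]
    | @cons _ _ w hr h =>
      have hxy : r x y := by
        have := hmap x _ _ hr
        rwa [hfix, ← hu, hinvol x] at this
      obtain ⟨k, z, hk, hkz, hcomp, hlxy⟩ := hswap x y hxy
      have hkx : gB k x = z := by rw [← hkz, hinvol k]
      have h' := h.map (hmap k)
      rw [hkx] at h'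
      have hword : (((twistedWord gB ys).map (gB y)).map (gB x)).map (gB k) =
          (twistedWord gB ys).map (gB z) := by
        simp only [List.map_map]
        refine List.map_congr_left fun b _ => ?_
        simp only [Function.comp_apply]
        rw [← hcomp, hinvol k]
      rw [hword] at h'
      obtain ⟨zs, hzs, hprod⟩ := ih z _ h'
      refine ⟨k :: zs, ?_, ?_⟩
      · rw [twistedWord, hzs, hk, hu, List.map_map, ← hu, ← hk, (hinvol k).comp_self, List.map_id]
      · rw [List.map_cons, List.prod_cons, hprod, List.map_cons, List.prod_cons, ← mul_assoc,
          ← mul_assoc, hlxy]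

/-- Every element generated by the `l_i` is a product of `l_i` with irreducible twisted word. -/
theorem exists_irreducible_twistedWord
    (hsymm : ∀ b c, r b c → r c b)
    (hfix : ∀ x : {i : B // i ∈ I}, gB x x = x)
    (hinvol : ∀ x : {i : B // i ∈ I}, Function.Involutive (gB x))
    (hmap : ∀ (x : {i : B // i ∈ I}) (b c : B), r b c → r (gB x b) (gB x c))
    (hl : ∀ x, l x * l x = 1)
    (hswap : ∀ x y : {i : B // i ∈ I}, r x y → ∃ k z : {i : B // i ∈ I},
      (k : B) = gB x y ∧ gB k z = x ∧ (∀ b, gB k (gB z b) = gB x (gB y b)) ∧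
        l x * l y = l k * l z)
    {a : L} (ha : a ∈ Subgroup.closure (Set.range l)) :
    ∃ ys, (ys.map l).prod = a ∧ IrreducibleWord r (twistedWord gB ys) := by
  have step : ∀ x a, (∃ ys, (ys.map l).prod = a ∧ IrreducibleWord r (twistedWord gB ys)) →
      ∃ ys, (ys.map l).prod = l x * a ∧ IrreducibleWord r (twistedWord gB ys) := by
    rintro x _ ⟨ys, rfl, hys⟩
    have hys' := hys.map (hmap x) (hinvol x)
    by_cases h : ∃ w, FrontRemoval r x ((twistedWord gB ys).map (gB x)) w
    · obtain ⟨w, hw⟩ := h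
      obtain ⟨zs, rfl, hprod⟩ :=
        exists_twistedWord_of_frontRemoval hfix hinvol hmap hl hswap ys x w hw
      exact ⟨zs, hprod, hys'.of_frontRemoval hsymm hw⟩
    · exact ⟨x :: ys, by simp, .cons hys' (not_exists.mp h)⟩
  induction ha using Subgroup.closure_induction_left with
  | one => exact ⟨[], rfl, .nil⟩
  | mul_left _ hx _ _ ih =>
    obtain ⟨x, rfl⟩ := hx
    exact step x _ ih
  | inv_mul_cancel _ hx _ _ ih =>
    obtain ⟨x, rfl⟩ := hx
    rw [inv_eq_of_mul_eq_one_left (hl x)]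
    exact step x _ ih

end Words

section RightAngled

variable {B W : Type*} [Group W] {M : CoxeterMatrix B}

theorem isLiftable_contragredientReflection (cs : CoxeterSystem M W)
    (hra : ∀ i j : B, i ≠ j → M i j = 2 ∨ M i j = 0) :
    M.IsLiftable (contragredientReflection fun b c => Commute (cs.simple b) (cs.simple c)) := by
  intro b c
  by_cases hbc : b = c
  · subst hbc
    rw [contragredientReflection_mul_self, one_pow]
  rcases hra b c hbc with h | h
  · have hcomm : Commute (cs.simple b) (cs.simple c) := by
      have hm := cs.simple_mul_simple_pow b c
      rw [h, pow_two] at hm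
      have := eq_inv_of_mul_eq_one_left hm
      rwa [mul_inv_rev, cs.inv_simple, cs.inv_simple] at this
    rw [h, pow_two]
    nth_rewrite 2 [contragredientReflection_comm
      (r := fun b c => Commute (cs.simple b) (cs.simple c)) (fun _ _ h => h.symm) hcomm]
    rw [mul_assoc, ← mul_assoc (contragredientReflection _ c), contragredientReflection_mul_self,
      one_mul, contragredientReflection_mul_self]
  · rw [h, pow_zero]

/-- The contragredient geometric representation of a right-angled Coxeter group. -/
noncomputable def contragredientRep (cs : CoxeterSystem M W)
    (hra : ∀ i j : B, i ≠ j → M i j = 2 ∨ M i j = 0) : W →* Function.End (B → ℤ) :=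
  cs.lift ⟨_, isLiftable_contragredientReflection cs hra⟩

theorem contragredientRep_simple (cs : CoxeterSystem M W)
    (hra : ∀ i j : B, i ≠ j → M i j = 2 ∨ M i j = 0) (b : B) :
    contragredientRep cs hra (cs.simple b) =
      contragredientReflection (fun b c => Commute (cs.simple b) (cs.simple c)) b :=
  cs.lift_apply_simple (isLiftable_contragredientReflection cs hra) b

theorem simple_injective_of_rightAngled (cs : CoxeterSystem M W)
    (hra : ∀ i j : B, i ≠ j → M i j = 2 ∨ M i j = 0) : Function.Injective cs.simple := by
  intro b c h
  by_contra hbc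
  have hval := congrFun (congrFun (congrArg (contragredientRep cs hra) h) (1 : B → ℤ)) b
  rw [contragredientRep_simple, contragredientRep_simple, contragredientReflection_apply_self,
    contragredientReflection_apply_of_rel hbc (by rw [h])] at hval
  norm_num at hval

theorem eq_nil_of_wordProd_eq_one (cs : CoxeterSystem M W)
    (hra : ∀ i j : B, i ≠ j → M i j = 2 ∨ M i j = 0) {v : List B}
    (hv : IrreducibleWord (fun b c => Commute (cs.simple b) (cs.simple c)) v)
    (h : cs.wordProd v = 1) : v = [] := by
  refine hv.eq_nil (fun _ _ h => h.symm) ?_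
  have := congrArg (contragredientRep cs hra) h
  rw [CoxeterSystem.wordProd, map_list_prod, List.map_map, map_one] at this
  rw [← this]
  congr 2
  funext b
  exact (contragredientRep_simple cs hra b).symm

/-- The `W`-component of a product of the elements `i · g_i`. -/
theorem left_prod_eq_wordProd_twistedWord (cs : CoxeterSystem M W) {I : Set B}
    {g_ : B → MulAut W} {gB : B → B → B}
    (hgB : ∀ i ∈ I, ∀ b : B, g_ i (cs.simple b) = cs.simple (gB i b))
    (ys : List {i : B // i ∈ I}) :
    ((ys.map fun x => (inl (cs.simple x.1) * inr (g_ x.1) :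
      W ⋊[MonoidHom.id (MulAut W)] MulAut W)).prod).left = cs.wordProd (twistedWord gB ys) := by
  induction ys with
  | nil => simp [twistedWord]
  | cons x ys ih =>
    have hx : ∀ v : List B, g_ x.1 (cs.wordProd v) = cs.wordProd (v.map (gB x.1)) := by
      intro v
      simp [CoxeterSystem.wordProd, map_list_prod, Function.comp_def, hgB x.1 x.2]
    rw [List.map_cons, List.prod_cons, SemidirectProduct.mul_left, ih, twistedWord,
      cs.wordProd_cons, ← hx]
    simp

end RightAngled

/-- Lemma on the group `L`: let `(W,S)` be a right-angled Coxeter system,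
`G` a group of automorphisms of `(W,S)`, `I ⊆ S`, and `{g_i}_{i ∈ I}` involutions in `G`
satisfying conditions (1)–(3).  Then `l_i ↦ i·g_i` defines an isomorphism from `L` onto
the subgroup `H ≤ W ⋊ G` generated by the `i·g_i`. -/
theorem L_iso_H (cs : CoxeterSystem M W)
    (hra : ∀ i j : B, i ≠ j → M i j = 2 ∨ M i j = 0)
    (G : Subgroup (MulAut W))
    (hGpres : ∀ g ∈ G, ∀ b : B, ∃ b' : B, (g : MulAut W) (cs.simple b) = cs.simple b')
    (I : Set B) (g_ : B → MulAut W) (gB : B → B → B)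
    (hGmem : ∀ i ∈ I, g_ i ∈ G)
    (hinv : ∀ i ∈ I, g_ i * g_ i = 1)
    (hgB : ∀ i ∈ I, ∀ b : B, g_ i (cs.simple b) = cs.simple (gB i b))
    (hcond2 : ∀ i ∈ I, ∀ j ∈ I,
      cs.simple i * cs.simple j = cs.simple j * cs.simple i →
      (gB i j ∈ I ∧ gB j i = i ∧ g_ (gB i j) = g_ i * g_ j * g_ i) ∨
      (gB j i ∈ I ∧ gB i j = j ∧ g_ (gB j i) = g_ j * g_ i * g_ j))
    (hcond3 : ∀ i ∈ I, gB i i = i) :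
    ∃ φ : PresentedGroup (Lrels cs I g_ gB) ≃* Hsub cs I g_,
      ∀ x : {i : B // i ∈ I},
        (φ (PresentedGroup.of x) : W ⋊[MonoidHom.id (MulAut W)] MulAut W) =
          inl (cs.simple x.1) * inr (g_ x.1) := by
  have hinj := simple_injective_of_rightAngled cs hra
  have hinvol : ∀ i ∈ I, Function.Involutive (gB i) := by
    intro i hi b
    apply hinj
    rw [← hgB i hi, ← hgB i hi, ← MulAut.mul_apply, hinv i hi, MulAut.one_apply]
  have hmap : ∀ (x : {i : B // i ∈ I}) (b c : B), Commute (cs.simple b) (cs.simple c) →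
      Commute (cs.simple (gB x b)) (cs.simple (gB x c)) := by
    intro x b c h
    rw [← hgB x x.2, ← hgB x x.2]
    exact h.map (g_ x)
  let t : {i : B // i ∈ I} → W ⋊[MonoidHom.id (MulAut W)] MulAut W :=
    fun x => inl (cs.simple x.1) * inr (g_ x.1)
  have hrels : ∀ q ∈ Lrels cs I g_ gB, FreeGroup.lift t q = 1 := by
    rintro q (⟨x, rfl⟩ | ⟨x, y, z, hcomm, hyx, -, hz, hgz, rfl⟩)
    · rw [map_mul, FreeGroup.lift_apply_of]
      ext1
      · simp [t, hgB x.1 x.2, hcond3 x.1 x.2]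
      · simp [t, hinv x.1 x.2]
    · rw [map_mul, map_inv, mul_inv_eq_one, map_mul, map_mul]
      simp only [FreeGroup.lift_apply_of]
      have hxy := hmap x _ _ hcomm
      rw [hcond3 x.1 x.2] at hxy
      ext1
      · have hzx : g_ (gB x.1 y.1) (cs.simple x.1) = cs.simple x.1 := by
          rw [hgz]
          simp [hgB x.1 x.2, hgB y.1 y.2, hcond3 x.1 x.2, hyx]
        simpa [t, hgB x.1 x.2, hzx, hz] using hxy.eq
      · simp [t, hz, hgz, mul_assoc, hinv x.1 x.2]
  let ψ := PresentedGroup.toGroup hrels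
  have hψ : ∀ x, ψ (.of x) = t x := fun x => PresentedGroup.toGroup.of hrels
  have hrange : ψ.range = Hsub cs I g_ := by
    rw [MonoidHom.range_eq_map, ← PresentedGroup.closure_range_of, MonoidHom.map_closure, Hsub]
    congr 1
    ext a
    constructor
    · rintro ⟨_, ⟨x, rfl⟩, rfl⟩
      exact ⟨x.1, x.2, hψ x⟩
    · rintro ⟨i, hi, rfl⟩
      exact ⟨_, ⟨⟨i, hi⟩, rfl⟩, hψ _⟩
  have hsq : ∀ x : {i : B // i ∈ I},
      (PresentedGroup.of x : PresentedGroup (Lrels cs I g_ gB)) * .of x = 1 := fun x =>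
    PresentedGroup.one_of_mem (Or.inl ⟨x, rfl⟩)
  have hrel : ∀ x y z : {i : B // i ∈ I}, Commute (cs.simple x.1) (cs.simple y.1) →
      gB y x = x → z = gB x y → g_ (gB x y) = g_ x * g_ y * g_ x →
      (PresentedGroup.of x : PresentedGroup (Lrels cs I g_ gB)) * .of y = .of z * .of x := by
    intro x y z hcomm hyx hz hg
    refine mul_inv_eq_one.mp (PresentedGroup.one_of_mem
      (Or.inr ⟨x, y, z, hcomm, hyx, hz ▸ z.2, hz, hg, rfl⟩))
  have hconj : ∀ x y z : {i : B // i ∈ I}, g_ z = g_ x * g_ y * g_ x →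
      ∀ b, gB z b = gB x (gB y (gB x b)) := by
    intro x y z h b
    apply hinj
    rw [← hgB z z.2, h]
    simp only [MulAut.mul_apply]
    rw [hgB x x.2, hgB y y.2, hgB x x.2]
  have hswap : ∀ x y : {i : B // i ∈ I}, Commute (cs.simple x.1) (cs.simple y.1) →
      ∃ k z : {i : B // i ∈ I}, (k : B) = gB x y ∧ gB k z = x ∧
        (∀ b, gB k (gB z b) = gB x (gB y b)) ∧
        (PresentedGroup.of x : PresentedGroup (Lrels cs I g_ gB)) * .of y = .of k * .of z := by
    intro x y hcomm
    rcases hcond2 x x.2 y y.2 hcomm with ⟨hmem, hyx, hg⟩ | ⟨hmem, hxy, hg⟩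
    · have hk := hconj x y ⟨_, hmem⟩ hg
      refine ⟨⟨_, hmem⟩, x, rfl, ?_, fun b => ?_, hrel x y _ hcomm hyx rfl hg⟩
      · rw [hk, hcond3 x x.2, hyx, hcond3 x x.2]
      · rw [hk, hinvol x x.2]
    · have hz := hconj y x ⟨_, hmem⟩ hg
      refine ⟨y, ⟨_, hmem⟩, hxy.symm, hinvol y y.2 _, fun b => ?_, ?_⟩
      · rw [hz, hinvol y y.2]
      · have h := congrArg (·⁻¹) (hrel y x ⟨_, hmem⟩ hcomm.symm hxy rfl hg)
        simpa only [mul_inv_rev, inv_eq_of_mul_eq_one_left (hsq _)] using h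
  have hker : Function.Injective ψ := by
    rw [injective_iff_map_eq_one]
    intro a ha
    obtain ⟨ys, rfl, hys⟩ := exists_irreducible_twistedWord
      (r := fun b c => Commute (cs.simple b) (cs.simple c))
      (l := fun x => (PresentedGroup.of x : PresentedGroup (Lrels cs I g_ gB)))
      (fun _ _ h => h.symm) (fun x => hcond3 x x.2) (fun x => hinvol x x.2) hmap hsq hswap
      (a := a) (by
        have h := PresentedGroup.closure_range_of (Lrels cs I g_ gB)
        exact h ▸ Subgroup.mem_top a)
    rw [map_list_prod, List.map_map] at ha
    have hone : cs.wordProd (twistedWord gB ys) = 1 := by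
      rw [← left_prod_eq_wordProd_twistedWord cs hgB ys]
      refine (congrArg SemidirectProduct.left ?_).trans SemidirectProduct.one_left
      rw [← ha]
      congr 2
      funext x
      exact (hψ x).symm
    have hnil := eq_nil_of_wordProd_eq_one cs hra hys hone
    cases ys with
    | nil => rfl
    | cons => simp [twistedWord] at hnil
  exact ⟨(MonoidHom.ofInjective hker).trans (MulEquiv.subgroupCongr hrange), hψ⟩
end
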